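/- Lemma (per-iteration error contraction). Let ε > 0 and suppose G is a (c,d)-regular (⌊k/(2ε)+1⌋, 1/2+ε)-expander. Let x ∈ ℝ₊ⁿ and run the message-passing algorithm on y = Ax. Then for every t ≥ 0, Err_{X_+}^{2t+2} ≤ ((1−2ε)/(1+2ε))·Err_{X_+}^{2t} + (2d/(1+2ε))·Err_{X_0}^{2t}. -/

import Mathlib

/-!
Even iterates underestimate `x` and odd iterates overestimate it, and after each half-iteration the
error of a variable is at most the total error of the other variables at any one of its
measurements. Extend the vertex set `P` of interest to a set `S` that still expands and such that
every vertex outside `S` has at least half of its neighbours outside `Γ(S)`. Summing the half-step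
bound over `S` against the expansion of `S`, once for each of two consecutive half-iterations,
yields the contraction on `S`, up to the error that enters `Γ(S)` from outside `S`; at the second
half-iteration that error is charged to the measurements outside `Γ(S)`, which only see errors
outside `S`.
-/

open Finset

namespace MP

/-- Neighborhood of a left vertex `i ∈ X`: the measurements involving `i`. -/
def nhdX {n m : ℕ} (A : Fin m → Fin n → Bool) (i : Fin n) : Finset (Fin m) :=
  Finset.univ.filter (fun j => A j i = true)

/-- Neighborhood of a right vertex `j ∈ Y`. -/
def nhdY {n m : ℕ} (A : Fin m → Fin n → Bool) (j : Fin m) : Finset (Fin n) :=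
  Finset.univ.filter (fun i => A j i = true)

/-- `Γ(S)`, the set of neighbors of `S ⊆ X`. -/
def Gam {n m : ℕ} (A : Fin m → Fin n → Bool) (S : Finset (Fin n)) : Finset (Fin m) :=
  S.biUnion (nhdX A)

/-- The measurement vector `y = A x`. -/
noncomputable def yvec {n m : ℕ} (A : Fin m → Fin n → Bool) (x : Fin n → ℝ) (j : Fin m) : ℝ :=
  ∑ i ∈ nhdY A j, x i

/-- Message from measurement `j` to variable `i`, given current variable messages `z`:
`y_j - ∑_{k ∈ N_y(j) \ {i}} z_k`. -/
noncomputable def msgY {n m : ℕ} (A : Fin m → Fin n → Bool) (x z : Fin n → ℝ)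
    (j : Fin m) (i : Fin n) : ℝ :=
  yvec A x j - ∑ k ∈ (nhdY A j).erase i, z k

/-- The algorithm's estimate `x̂^s` (equal to the variable-to-check message `m_{i→j}^s`,
which does not depend on `j`).  At odd times it is the min of incoming check messages;
at even times `s+1` it is `max(0, max of incoming check messages)`. -/
noncomputable def xhat {n m : ℕ} (A : Fin m → Fin n → Bool) (x : Fin n → ℝ) :
    ℕ → Fin n → ℝ
  | 0 => fun _ => 0
  | s + 1 => fun i =>
      if Even (s + 1) then
        max 0 (sSup ((fun l => msgY A x (xhat A x s) l i) '' (↑(nhdX A i) : Set (Fin m))))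
      else
        sInf ((fun l => msgY A x (xhat A x s) l i) '' (↑(nhdX A i) : Set (Fin m)))

/-- The variable-to-check message `m_{i→j}^s` (independent of `j`). -/
noncomputable def mXY {n m : ℕ} (A : Fin m → Fin n → Bool) (x : Fin n → ℝ)
    (s : ℕ) (i : Fin n) (_j : Fin m) : ℝ := xhat A x s i

/-- The check-to-variable message `m_{j→i}^s`. -/
noncomputable def mYX {n m : ℕ} (A : Fin m → Fin n → Bool) (x : Fin n → ℝ)
    (s : ℕ) (j : Fin m) (i : Fin n) : ℝ := msgY A x (xhat A x s) j i

/-- `G` is `(c,d)`-regular. -/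
def IsRegular {n m : ℕ} (A : Fin m → Fin n → Bool) (c d : ℕ) : Prop :=
  (∀ i, (nhdX A i).card = c) ∧ (∀ j, (nhdY A j).card = d)

/-- `G` is a `(kk, α)`-expander (w.r.t. left degree `c`). -/
def IsExpander {n m : ℕ} (A : Fin m → Fin n → Bool) (c kk : ℕ) (α : ℝ) : Prop :=
  ∀ S : Finset (Fin n), S.card ≤ kk → α * c * S.card ≤ ((Gam A S).card : ℝ)

/-- ℓ¹ norm on `ℝⁿ`. -/
noncomputable def l1 {n : ℕ} (u : Fin n → ℝ) : ℝ := ∑ i, |u i|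

/-- `z` has at most `k` nonzero entries. -/
def IsKSparse {n : ℕ} (k : ℕ) (z : Fin n → ℝ) : Prop :=
  (Finset.univ.filter (fun i => z i ≠ 0)).card ≤ k

/-- `xk` is a best `k`-sparse nonnegative approximation of `x` in ℓ¹. -/
def BestKSparse {n : ℕ} (k : ℕ) (x xk : Fin n → ℝ) : Prop :=
  (∀ i, 0 ≤ xk i) ∧ IsKSparse k xk ∧
    ∀ z : Fin n → ℝ, (∀ i, 0 ≤ z i) → IsKSparse k z →
      l1 (fun i => x i - xk i) ≤ l1 (fun i => x i - z i)


end MP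

open MP Finset

namespace MP

variable {n m c d K : ℕ} {A : Fin m → Fin n → Bool} {α : ℝ}

section Graph

lemma mem_nhdX_iff_mem_nhdY {i : Fin n} {j : Fin m} : j ∈ nhdX A i ↔ i ∈ nhdY A j := by
  simp [nhdX, nhdY]

lemma nhdX_subset_Gam {S : Finset (Fin n)} {i : Fin n} (hi : i ∈ S) : nhdX A i ⊆ Gam A S :=
  subset_biUnion_of_mem (nhdX A) hi

lemma card_Gam_le (hX : ∀ i, (nhdX A i).card ≤ c) (S : Finset (Fin n)) :
    (Gam A S).card ≤ S.card * c :=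
  card_biUnion_le_card_mul _ _ _ fun i _ => hX i

lemma card_Gam_insert_add_card_inter (S : Finset (Fin n)) (i : Fin n) :
    (Gam A (insert i S)).card + (nhdX A i ∩ Gam A S).card =
      (nhdX A i).card + (Gam A S).card := by
  rw [Gam, biUnion_insert]
  exact card_union_add_card_inter (nhdX A i) (Gam A S)

lemma sum_yvec (T : Finset (Fin m)) (f : Fin n → ℝ) :
    ∑ j ∈ T, yvec A f j = ∑ i, ((nhdX A i ∩ T).card : ℝ) * f i := by
  simp only [yvec]
  rw [sum_comm' (t' := univ) (s' := fun i => nhdX A i ∩ T)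
    (by simp [mem_nhdX_iff_mem_nhdY, and_comm])]
  simp only [sum_const, nsmul_eq_mul]

lemma sum_Gam_yvec_le (hX : ∀ i, (nhdX A i).card ≤ c) (S : Finset (Fin n)) {f : Fin n → ℝ}
    (hf : 0 ≤ f) :
    ∑ j ∈ Gam A S, yvec A f j ≤
      c * ∑ i ∈ S, f i + ∑ i ∈ Sᶜ, ((nhdX A i ∩ Gam A S).card : ℝ) * f i := by
  rw [sum_yvec, ← sum_add_sum_compl S, mul_sum]
  gcongr with i
  · exact hf i
  · exact (card_le_card inter_subset_left).trans (hX i)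

lemma sum_compl_Gam_yvec (S : Finset (Fin n)) (f : Fin n → ℝ) :
    ∑ j ∈ (Gam A S)ᶜ, yvec A f j = ∑ i ∈ Sᶜ, ((nhdX A i \ Gam A S).card : ℝ) * f i := by
  simp only [sum_yvec, ← sdiff_eq_inter_compl]
  refine (sum_subset (subset_univ Sᶜ) fun i _ hi => ?_).symm
  rw [sdiff_eq_empty_iff_subset.mpr (nhdX_subset_Gam (by simpa using hi))]
  simp

end Graph

section Expander

lemma IsExpander.mul_le_card_nhdX (hexp : IsExpander A c K α) (hK : 0 < K) (i : Fin n) :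
    α * c ≤ (nhdX A i).card := by
  simpa [Gam] using hexp {i} (by simpa using Nat.succ_le_of_lt hK)

lemma IsExpander.nonempty_nhdX (hexp : IsExpander A c K α) (hα : 0 < α) (hc : 0 < c)
    (hK : 0 < K) (i : Fin n) : (nhdX A i).Nonempty := by
  have hpos : 0 < α * c := by positivity
  exact card_pos.mp (by exact_mod_cast hpos.trans_le (hexp.mul_le_card_nhdX hK i))

lemma IsExpander.le_one (hexp : IsExpander A c K α) (hc : 0 < c) (hK : 0 < K) {i : Fin n}
    (hX : (nhdX A i).card ≤ c) : α ≤ 1 := by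
  have hdeg : ((nhdX A i).card : ℝ) ≤ c := by exact_mod_cast hX
  exact (mul_le_iff_le_one_left (by positivity)).mp ((hexp.mul_le_card_nhdX hK i).trans hdeg)

-- The induction peels off the constant layer of height `min f` over all of `S`.
lemma IsExpander.mul_sum_le_sum (hexp : IsExpander A c K α) {S : Finset (Fin n)}
    (hS : S.card ≤ K) {f : Fin n → ℝ} {F : Fin m → ℝ} (hf : ∀ i ∈ S, 0 ≤ f i)
    (hF : ∀ i ∈ S, ∀ j ∈ nhdX A i, f i ≤ F j) :
    α * c * ∑ i ∈ S, f i ≤ ∑ j ∈ Gam A S, F j := by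
  induction S using Finset.eraseInduction generalizing f F with
  | H S ih =>
    obtain rfl | hne := S.eq_empty_or_nonempty
    · simp [Gam]
    obtain ⟨a, ha, hmin⟩ := exists_min_image S f hne
    have hlayer : α * c * S.card * f a ≤ (Gam A S).card * f a :=
      mul_le_mul_of_nonneg_right (hexp S hS) (hf a ha)
    have hrest : α * c * ∑ i ∈ S, (f i - f a) ≤ ∑ j ∈ Gam A S, (F j - f a) := calc
      _ = α * c * ∑ i ∈ S.erase a, (f i - f a) := by rw [sum_erase S (sub_self (f a))]
      _ ≤ ∑ j ∈ Gam A (S.erase a), (F j - f a) :=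
        ih a ha ((card_le_card (erase_subset a S)).trans hS)
          (fun i hi => sub_nonneg.mpr (hmin i (mem_of_mem_erase hi)))
          (fun i hi j hj => sub_le_sub_right (hF i (mem_of_mem_erase hi) j hj) _)
      _ ≤ ∑ j ∈ Gam A S, (F j - f a) := by
        refine sum_le_sum_of_subset_of_nonneg
          (biUnion_subset_biUnion_of_subset_left _ (erase_subset a S)) fun j hj _ => ?_
        obtain ⟨i, hi, hij⟩ := mem_biUnion.mp hj
        exact sub_nonneg.mpr ((hmin i hi).trans (hF i hi j hij))
    simp only [sum_sub_distrib, sum_const, nsmul_eq_mul] at hrest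
    linarith

lemma pos_of_cast_lt_mul_cast {N : ℕ} {a : ℝ} (h : N < a * K) : 0 < K := by
  refine Nat.pos_of_ne_zero fun hK => ?_
  rw [hK, Nat.cast_zero, mul_zero] at h
  exact h.not_ge N.cast_nonneg

lemma IsExpander.card_le_of_card_lt (hexp : IsExpander A c K α) (hc : 0 < c)
    (hX : ∀ i, (nhdX A i).card ≤ c) {P : Finset (Fin n)} (hP : P.card < (2 * α - 1) * K) :
    P.card ≤ K := by
  obtain rfl | ⟨i, -⟩ := P.eq_empty_or_nonempty
  · simp
  have hα : α ≤ 1 := hexp.le_one hc (pos_of_cast_lt_mul_cast hP) (hX i)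
  have hfactor : (2 * α - 1) * K ≤ K := mul_le_of_le_one_left K.cast_nonneg (by linarith)
  exact_mod_cast hP.le.trans hfactor

/-- A set `S` of left vertices is saturated if each vertex outside `S` has at most half of its
neighbours in `Γ(S)`; enlarging such a set always costs many new neighbours. -/
def IsSaturated (A : Fin m → Fin n → Bool) (S : Finset (Fin n)) : Prop :=
  ∀ i ∉ S, 2 * (nhdX A i ∩ Gam A S).card ≤ (nhdX A i).card

-- `S` minimizes the potential `2 |Γ(S)| - c |S|`: expansion makes it too large at `|S| = K`, and
-- adding a vertex with more than half of its neighbours in `Γ(S)` would lower it.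
lemma IsExpander.exists_isSaturated (hexp : IsExpander A c K α) (hc : 0 < c)
    (hX : ∀ i, (nhdX A i).card ≤ c) {P : Finset (Fin n)} (hP : P.card < (2 * α - 1) * K) :
    ∃ S, P ⊆ S ∧ S.card ≤ K ∧ IsSaturated A S := by
  have hPK : P.card ≤ K := hexp.card_le_of_card_lt hc hX hP
  let potential (S : Finset (Fin n)) : ℝ := 2 * (Gam A S).card - c * S.card
  obtain ⟨S, hS, hmin⟩ := exists_min_image (univ.filter fun S => P ⊆ S ∧ S.card ≤ K) potential
    ⟨P, by simp [hPK]⟩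
  simp only [mem_filter_univ, and_imp] at hS hmin
  obtain ⟨hPS, hSK⟩ := hS
  have hSlt : S.card < K := by
    refine hSK.lt_of_ne fun hcard => ?_
    have hSP : potential S ≤ potential P := hmin P subset_rfl hPK
    have hGamP : ((Gam A P).card : ℝ) ≤ P.card * c := by exact_mod_cast card_Gam_le hX P
    have hGamS : α * c * K ≤ (Gam A S).card := by simpa [hcard] using hexp S hSK
    have hcP : (c : ℝ) * P.card < c * ((2 * α - 1) * K) := by gcongr
    simp only [potential, hcard] at hSP
    linarith
  refine ⟨S, hPS, hSK, fun i hi => ?_⟩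
  have hcardi : (insert i S).card = S.card + 1 := card_insert_of_notMem hi
  have hpot : potential S ≤ potential (insert i S) :=
    hmin _ (hPS.trans (subset_insert i S)) (by omega)
  have hGami : ((Gam A (insert i S)).card + (nhdX A i ∩ Gam A S).card : ℝ) =
      (nhdX A i).card + (Gam A S).card := by
    exact_mod_cast card_Gam_insert_add_card_inter S i
  have hdeg : ((nhdX A i).card : ℝ) ≤ c := by exact_mod_cast hX i
  have hhalf : (2 * (nhdX A i ∩ Gam A S).card : ℝ) ≤ (nhdX A i).card := by
    simp only [potential, hcardi, Nat.cast_succ] at hpot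
    linarith
  exact_mod_cast hhalf

end Expander

section HalfStep

variable {S : Finset (Fin n)} {e o r : Fin n → ℝ}

/-- The error bound of a half-iteration taking the variable errors `e` to `o`: at each measurement
of a variable, its new error is at most the total old error of the other variables there. Errors
are measured so as to be nonnegative: `x - x̂` at even times and `x̂ - x` at odd times. -/
def HalfStep (A : Fin m → Fin n → Bool) (e o : Fin n → ℝ) : Prop :=
  ∀ i, ∀ j ∈ nhdX A i, o i ≤ ∑ l ∈ (nhdY A j).erase i, e l

lemma HalfStep.add_le_yvec (h : HalfStep A e o) {i : Fin n} {j : Fin m} (hj : j ∈ nhdX A i) :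
    e i + o i ≤ yvec A e j := by
  rw [yvec, ← add_sum_erase _ _ (mem_nhdX_iff_mem_nhdY.mp hj)]
  exact add_le_add_right (h i j hj) _

lemma HalfStep.yvec_le (h : HalfStep A e o) (he : 0 ≤ e) {j : Fin m}
    (hY : (nhdY A j).card ≤ d) : yvec A o j ≤ d * yvec A e j := calc
  yvec A o j ≤ (nhdY A j).card • yvec A e j :=
    sum_le_card_nsmul _ _ _ fun i hi =>
      (le_add_of_nonneg_left (he i)).trans (h.add_le_yvec (mem_nhdX_iff_mem_nhdY.mpr hi))
  _ ≤ d * yvec A e j := by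
    rw [nsmul_eq_mul]
    gcongr
    exact sum_nonneg fun i _ => he i

lemma HalfStep.mul_sum_add_le (h : HalfStep A e o) (he : 0 ≤ e) (ho : 0 ≤ o)
    (hexp : IsExpander A c K α) (hX : ∀ i, (nhdX A i).card ≤ c) (hS : S.card ≤ K) :
    α * c * (∑ i ∈ S, e i + ∑ i ∈ S, o i) ≤
      c * ∑ i ∈ S, e i + ∑ i ∈ Sᶜ, ((nhdX A i ∩ Gam A S).card : ℝ) * e i := by
  rw [← sum_add_distrib]
  exact (hexp.mul_sum_le_sum hS (fun i _ => add_nonneg (he i) (ho i))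
    fun i _ j hj => h.add_le_yvec hj).trans (sum_Gam_yvec_le hX S he)

lemma HalfStep.sum_inter_Gam_le (h : HalfStep A e o) (he : 0 ≤ e) (ho : 0 ≤ o)
    (hY : ∀ j, (nhdY A j).card ≤ d) (hsat : IsSaturated A S) :
    ∑ i ∈ Sᶜ, ((nhdX A i ∩ Gam A S).card : ℝ) * o i ≤
      d * ∑ i ∈ Sᶜ, ((nhdX A i \ Gam A S).card : ℝ) * e i := calc
  _ ≤ ∑ i ∈ Sᶜ, ((nhdX A i \ Gam A S).card : ℝ) * o i := by
    refine sum_le_sum fun i hi => mul_le_mul_of_nonneg_right ?_ (ho i)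
    have hhalf : 2 * (nhdX A i ∩ Gam A S).card ≤ (nhdX A i).card := hsat i (mem_compl.mp hi)
    have hsplit := card_inter_add_card_sdiff (nhdX A i) (Gam A S)
    exact Nat.cast_le.mpr (by omega)
  _ = ∑ j ∈ (Gam A S)ᶜ, yvec A o j := (sum_compl_Gam_yvec S o).symm
  _ ≤ ∑ j ∈ (Gam A S)ᶜ, d * yvec A e j := sum_le_sum fun j _ => h.yvec_le he (hY j)
  _ = d * ∑ i ∈ Sᶜ, ((nhdX A i \ Gam A S).card : ℝ) * e i := by
    rw [← mul_sum, sum_compl_Gam_yvec]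

lemma sum_inter_Gam_add_sum_sdiff_Gam_le (he : 0 ≤ e) (hX : ∀ i, (nhdX A i).card ≤ c)
    (hd : 0 < d) :
    ∑ i ∈ Sᶜ, ((nhdX A i ∩ Gam A S).card : ℝ) * e i +
        d * ∑ i ∈ Sᶜ, ((nhdX A i \ Gam A S).card : ℝ) * e i ≤
      c * (d * ∑ i ∈ Sᶜ, e i) := by
  simp only [mul_sum, ← sum_add_distrib, ← mul_assoc, ← add_mul]
  gcongr with i
  · exact he i
  have hdeg : (nhdX A i ∩ Gam A S).card + d * (nhdX A i \ Gam A S).card ≤ c * d := calc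
    _ ≤ d * (nhdX A i ∩ Gam A S).card + d * (nhdX A i \ Gam A S).card := by
      gcongr
      exact Nat.le_mul_of_pos_left _ hd
    _ = (nhdX A i).card * d := by rw [← mul_add, card_inter_add_card_sdiff, mul_comm]
    _ ≤ c * d := by gcongr; exact hX i
  exact_mod_cast hdeg

lemma HalfStep.contraction_of_isSaturated (h₁ : HalfStep A e o) (h₂ : HalfStep A o r)
    (he : 0 ≤ e) (ho : 0 ≤ o) (hr : 0 ≤ r) (hexp : IsExpander A c K α) (hα : 1 / 2 ≤ α)
    (hc : 0 < c) (hd : 0 < d) (hX : ∀ i, (nhdX A i).card ≤ c) (hY : ∀ j, (nhdY A j).card ≤ d)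
    (hS : S.card ≤ K) (hsat : IsSaturated A S) :
    α * ∑ i ∈ S, r i ≤ (1 - α) * ∑ i ∈ S, e i + d * ∑ i ∈ Sᶜ, e i := by
  have hfirst := h₁.mul_sum_add_le he ho hexp hX hS
  have hsecond := h₂.mul_sum_add_le ho hr hexp hX hS
  have hcharge := h₁.sum_inter_Gam_le he ho hY hsat
  have houtside := sum_inter_Gam_add_sum_sdiff_Gam_le (S := S) he hX hd
  have hO : 0 ≤ (2 * α - 1) * (c * ∑ i ∈ S, o i) :=
    mul_nonneg (by linarith) (mul_nonneg c.cast_nonneg (sum_nonneg fun i _ => ho i))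
  refine le_of_mul_le_mul_left ?_ (Nat.cast_pos.mpr hc : (0 : ℝ) < c)
  linarith

lemma HalfStep.contraction (h₁ : HalfStep A e o) (h₂ : HalfStep A o r) (he : 0 ≤ e)
    (ho : 0 ≤ o) (hr : 0 ≤ r) (hexp : IsExpander A c K α) (hα : 1 / 2 ≤ α) (hc : 0 < c)
    (hd : 0 < d) (hX : ∀ i, (nhdX A i).card ≤ c) (hY : ∀ j, (nhdY A j).card ≤ d)
    {P : Finset (Fin n)} (hP : P.card < (2 * α - 1) * K) :
    α * ∑ i ∈ P, r i ≤ (1 - α) * ∑ i ∈ P, e i + d * ∑ i ∈ Pᶜ, e i := by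
  obtain ⟨S, hPS, hS, hsat⟩ := hexp.exists_isSaturated hc hX hP
  have hcontr := h₁.contraction_of_isSaturated h₂ he ho hr hexp hα hc hd hX hY hS hsat
  have hrP : α * ∑ i ∈ P, r i ≤ α * ∑ i ∈ S, r i :=
    mul_le_mul_of_nonneg_left (sum_le_sum_of_subset_of_nonneg hPS fun i _ _ => hr i)
      (by linarith)
  have heS : ∑ i ∈ S \ P, e i + ∑ i ∈ P, e i = ∑ i ∈ S, e i := sum_sdiff hPS
  have heP : ∑ i ∈ Pᶜ, e i = ∑ i ∈ S \ P, e i + ∑ i ∈ Sᶜ, e i := by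
    linarith [sum_add_sum_compl S e, sum_add_sum_compl P e]
  have hd1 : (1 : ℝ) ≤ d := by exact_mod_cast hd
  have hgap : 0 ≤ (d - (1 - α)) * ∑ i ∈ S \ P, e i :=
    mul_nonneg (by linarith) (sum_nonneg fun i _ => he i)
  rw [← heS] at hcontr
  rw [heP]
  linarith

end HalfStep

section Messages

variable {x : Fin n → ℝ}

lemma msgY_eq_add_sum {i : Fin n} {j : Fin m} (hj : j ∈ nhdX A i) (z : Fin n → ℝ) :
    msgY A x z j i = x i + ∑ l ∈ (nhdY A j).erase i, (x l - z l) := by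
  rw [msgY, yvec, ← add_sum_erase _ _ (mem_nhdX_iff_mem_nhdY.mp hj), sum_sub_distrib,
    add_sub_assoc]

lemma xhat_odd (t : ℕ) (i : Fin n) :
    xhat A x (2 * t + 1) i =
      sInf ((fun l => msgY A x (xhat A x (2 * t)) l i) '' (nhdX A i : Set (Fin m))) :=
  if_neg (by simp)

lemma xhat_even (t : ℕ) (i : Fin n) :
    xhat A x (2 * t + 2) i =
      max 0 (sSup ((fun l => msgY A x (xhat A x (2 * t + 1)) l i) '' (nhdX A i : Set (Fin m)))) :=
  if_pos (even_two.mul_right (t + 1))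

lemma halfStep_odd (t : ℕ) :
    HalfStep A (x - xhat A x (2 * t)) (xhat A x (2 * t + 1) - x) := by
  intro i j hj
  have hmsg : xhat A x (2 * t + 1) i ≤ msgY A x (xhat A x (2 * t)) j i := by
    rw [xhat_odd]
    exact csInf_le ((nhdX A i).finite_toSet.image _).bddBelow (Set.mem_image_of_mem _ hj)
  rw [msgY_eq_add_sum hj] at hmsg
  exact sub_le_iff_le_add'.mpr hmsg

lemma halfStep_even (t : ℕ) :
    HalfStep A (xhat A x (2 * t + 1) - x) (x - xhat A x (2 * t + 2)) := by
  intro i j hj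
  have hmsg : msgY A x (xhat A x (2 * t + 1)) j i ≤ xhat A x (2 * t + 2) i := by
    rw [xhat_even]
    exact le_max_of_le_right
      (le_csSup ((nhdX A i).finite_toSet.image _).bddAbove (Set.mem_image_of_mem _ hj))
  rw [msgY_eq_add_sum hj] at hmsg
  simp only [Pi.sub_apply, sum_sub_distrib] at hmsg ⊢
  linarith

lemma le_xhat_odd (hne : ∀ i, (nhdX A i).Nonempty) {t : ℕ} (h : xhat A x (2 * t) ≤ x) :
    x ≤ xhat A x (2 * t + 1) := by
  intro i
  rw [xhat_odd]
  refine le_csInf ((coe_nonempty.mpr (hne i)).image _) (Set.forall_mem_image.mpr fun j hj => ?_)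
  rw [msgY_eq_add_sum hj]
  exact le_add_of_nonneg_right (sum_nonneg fun l _ => sub_nonneg.mpr (h l))

lemma xhat_even_succ_le (hne : ∀ i, (nhdX A i).Nonempty) (hx : 0 ≤ x) {t : ℕ}
    (h : x ≤ xhat A x (2 * t + 1)) : xhat A x (2 * t + 2) ≤ x := by
  intro i
  rw [xhat_even]
  refine max_le (hx i) (csSup_le ((coe_nonempty.mpr (hne i)).image _)
    (Set.forall_mem_image.mpr fun j hj => ?_))
  rw [msgY_eq_add_sum hj]
  exact add_le_of_nonpos_right (sum_nonpos fun l _ => sub_nonpos.mpr (h l))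

lemma xhat_even_le (hne : ∀ i, (nhdX A i).Nonempty) (hx : 0 ≤ x) (t : ℕ) :
    xhat A x (2 * t) ≤ x := by
  induction t with
  | zero => exact hx
  | succ t ih => exact xhat_even_succ_le hne hx (le_xhat_odd hne ih)

end Messages

lemma lt_mul_floor_div_add_one (a : ℝ) {b : ℝ} (hb : 0 < b) : a < b * ⌊a / b + 1⌋₊ := by
  have hfloor : a / b < ⌊a / b + 1⌋₊ := by simpa using Nat.sub_one_lt_floor (a / b + 1)
  exact (div_lt_iff₀' hb).mp hfloor

end MP

theorem error_contraction_general {n m c d K : ℕ} (hc : 0 < c) (hd : 0 < d)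
    {A : Fin m → Fin n → Bool} {ε : ℝ} (hε : 0 < ε) (hX : ∀ i, (nhdX A i).card ≤ c)
    (hY : ∀ j, (nhdY A j).card ≤ d) (hexp : IsExpander A c K (1 / 2 + ε))
    {x : Fin n → ℝ} (hx : ∀ i, 0 ≤ x i) {P : Finset (Fin n)} (hP : P.card < 2 * ε * K) (t : ℕ) :
    ∑ i ∈ P, (x i - xhat A x (2 * t + 2) i) ≤
      (1 - 2 * ε) / (1 + 2 * ε) * ∑ i ∈ P, (x i - xhat A x (2 * t) i) +
        2 * (d : ℝ) / (1 + 2 * ε) * ∑ i ∈ Pᶜ, (x i - xhat A x (2 * t) i) := by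
  have hne : ∀ i, (nhdX A i).Nonempty :=
    hexp.nonempty_nhdX (by positivity) hc (pos_of_cast_lt_mul_cast hP)
  have hlow : xhat A x (2 * t) ≤ x := xhat_even_le hne hx t
  have hup : x ≤ xhat A x (2 * t + 1) := le_xhat_odd hne hlow
  have hlow' : xhat A x (2 * t + 2) ≤ x := xhat_even_succ_le hne hx hup
  have hcontr := (halfStep_odd t).contraction (halfStep_even t) (sub_nonneg.mpr hlow)
    (sub_nonneg.mpr hup) (sub_nonneg.mpr hlow') hexp (by linarith) hc hd hX hY (P := P)
    (by linarith)
  simp only [Pi.sub_apply] at hcontr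
  rw [div_mul_eq_mul_div, div_mul_eq_mul_div, ← add_div, le_div_iff₀ (by positivity)]
  linarith

/-- **Lemma (per-iteration error contraction).** With `X₊ = supp x⁽ᵏ⁾` and
`X₀ = X \ X₊`, for every `t ≥ 0`,
`Err_{X₊}^{2t+2} ≤ ((1-2ε)/(1+2ε))·Err_{X₊}^{2t} + (2d/(1+2ε))·Err_{X₀}^{2t}`. -/
theorem error_contraction (n m c d k : ℕ)
    (hn : 0 < n) (hm : 0 < m) (hc : 0 < c) (hd : 0 < d) (hk : 0 < k)
    (A : Fin m → Fin n → Bool) (ε : ℝ) (hε : 0 < ε)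
    (hreg : IsRegular A c d)
    (hexp : IsExpander A c (Nat.floor ((k : ℝ) / (2 * ε) + 1)) (1 / 2 + ε))
    (x xk : Fin n → ℝ) (hx : ∀ i, 0 ≤ x i) (hbest : BestKSparse k x xk) :
    ∀ t : ℕ,
      ∑ i ∈ Finset.univ.filter (fun i => xk i ≠ 0), (x i - xhat A x (2 * t + 2) i) ≤
        (1 - 2 * ε) / (1 + 2 * ε) *
            ∑ i ∈ Finset.univ.filter (fun i => xk i ≠ 0), (x i - xhat A x (2 * t) i) +
          2 * (d : ℝ) / (1 + 2 * ε) *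
            ∑ i ∈ Finset.univ \ Finset.univ.filter (fun i => xk i ≠ 0),
              (x i - xhat A x (2 * t) i) := by
  have hP : ((univ.filter fun i => xk i ≠ 0).card : ℝ) ≤ k := by exact_mod_cast hbest.2.1
  exact error_contraction_general hc hd hε (fun i => (hreg.1 i).le) (fun j => (hreg.2 j).le) hexp
    hx (hP.trans_lt (lt_mul_floor_div_add_one _ (by positivity)))
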